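/- arXiv:2312.06370 — 2 statements merged into one kernel-verified Lean document; each statement's English description precedes it below -/
import Mathlib

section
/- Let n ≥ 2k+1 and F ⊆ binom([n],k). Let C = {A \ {n} : A ∈ F, n ∈ A} ⊆ binom([n-1],k-1) with density γ = |C|/binom(n-1,k-1) > 0, and B = {A ∈ F : n ∉ A} ⊆ binom([n-1],k) with density β = |B|/binom(n-1,k). Then the number of disjoint pairs (c, b) with c ∈ C, b ∈ B satisfies e(C,B)/|C| ≥ binom(n-k,k)·(β - (k/(n-k))·√(β/γ)). -/
/-!
A set `b` is disjoint from `c ⊆ V`, where `|V| = m = n - 1`, exactly when `b` lies in the complement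
`V \ c`. So the disjointness graph between `(k-1)`-sets and `k`-sets is the inclusion graph between
levels `k` and `m - k + 1 = n - k` of the Boolean lattice of `V`, and its inclusion operator is, up
to a factorial, a product of one-step lifts.

* Let `lift` and `lower` be the one-step sum operators between levels `j` and `j + 1`. They are
  adjoint (`sum_lift_mul`), and on level `j` they satisfy `lower ∘ lift - lift ∘ lower = m - 2j`
  (`lower_lift`). By induction on `j`, this gives `‖lift g‖² ≤ j (m - j - 1) ‖g‖²` for every `g` on
  level `j` with sum zero (`lift_gap`).
* Iterating from level `k` up to level `j`, the function `S ↦ ∑_{b ⊆ S, |b| = k} g b` has squared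
  norm at most `C(j-1, k-1) C(m-k-1, j-k) ‖g‖²` (`iterated_gap`).
* Apply this to `g = 1_B - β` with `j = n - k`, and use Cauchy–Schwarz over `c ∈ C`. With
  `κ = k / (n - k)`, absorption identities for binomial coefficients give
  `C(m, k-1) = κ C(m, k)`, `C(n-k-1, k-1) = κ C(n-k, k)` and
  `C(n-k-2, n-2k) ≤ κ C(n-k-1, k-1)`, which turn the bound into the stated one.
-/

open Finset

/-- The one-step up operator: the value at `S` is the sum of `g` over the sets obtained from `S` by
deleting one point. -/
def lift (g : Finset ℕ → ℝ) (S : Finset ℕ) : ℝ := ∑ x ∈ S, g (S.erase x)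

/-- The one-step down operator in the ground set `V`: the value at `T` is the sum of `g` over the
sets obtained from `T` by adding one point of `V \ T`. -/
def lower (V : Finset ℕ) (g : Finset ℕ → ℝ) (T : Finset ℕ) : ℝ := ∑ x ∈ V \ T, g (insert x T)

/-- `lift` and `lower` are adjoint. -/
lemma sum_lift_mul (V : Finset ℕ) (j : ℕ) (f h : Finset ℕ → ℝ) :
    ∑ S ∈ V.powersetCard (j + 1), lift f S * h S
      = ∑ T ∈ V.powersetCard j, f T * lower V h T := by
  simp only [lift, lower, sum_mul, mul_sum]
  rw [sum_sigma', sum_sigma']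
  refine sum_bij' (fun p _ => ⟨p.1.erase p.2, p.2⟩) (fun p _ => ⟨insert p.2 p.1, p.2⟩)
    ?_ ?_ ?_ ?_ ?_
  · rintro ⟨S, x⟩ hp
    simp only [mem_sigma, mem_powersetCard, mem_sdiff] at hp ⊢
    obtain ⟨⟨hS, hc⟩, hx⟩ := hp
    refine ⟨⟨(erase_subset _ _).trans hS, ?_⟩, hS hx, notMem_erase _ _⟩
    rw [card_erase_of_mem hx, hc]; rfl
  · rintro ⟨T, x⟩ hp
    simp only [mem_sigma, mem_powersetCard, mem_sdiff] at hp ⊢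
    obtain ⟨⟨hT, hc⟩, hx, hxT⟩ := hp
    exact ⟨⟨insert_subset hx hT, by rw [card_insert_of_notMem hxT, hc]⟩, mem_insert_self _ _⟩
  · rintro ⟨S, x⟩ hp
    simp only [mem_sigma] at hp
    simp [insert_erase hp.2]
  · rintro ⟨T, x⟩ hp
    simp only [mem_sigma, mem_sdiff] at hp
    simp [erase_insert hp.2.2]
  · rintro ⟨S, x⟩ hp
    simp only [mem_sigma] at hp
    simp [insert_erase hp.2]

/-- The commutation relation `lower ∘ lift - lift ∘ lower = m - 2j` on level `j`: both compositions
contain the sum over all exchanges of a point of `T` for a point of `V \ T`. -/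
lemma lower_lift (V T : Finset ℕ) (hT : T ⊆ V) (g : Finset ℕ → ℝ) :
    lower V (lift g) T = lift (lower V g) T + ((V.card : ℝ) - 2 * T.card) * g T := by
  have h1 : lower V (lift g) T = ((V.card : ℝ) - T.card) * g T
      + ∑ x ∈ V \ T, ∑ y ∈ T, g (insert x (T.erase y)) := by
    unfold lower lift
    have : ∀ x ∈ V \ T, ∑ y ∈ insert x T, g ((insert x T).erase y)
        = g T + ∑ y ∈ T, g (insert x (T.erase y)) := by
      intro x hx
      have hxT := (mem_sdiff.1 hx).2
      rw [sum_insert hxT, erase_insert hxT]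
      congr 1
      refine sum_congr rfl fun y hy => ?_
      rw [erase_insert_of_ne]
      rintro rfl
      exact hxT hy
    rw [sum_congr rfl this, sum_add_distrib, sum_const, nsmul_eq_mul, card_sdiff_of_subset hT,
      Nat.cast_sub (card_le_card hT)]
  have h2 : lift (lower V g) T = (T.card : ℝ) * g T
      + ∑ y ∈ T, ∑ x ∈ V \ T, g (insert x (T.erase y)) := by
    unfold lower lift
    have : ∀ y ∈ T, ∑ x ∈ V \ T.erase y, g (insert x (T.erase y))
        = g T + ∑ x ∈ V \ T, g (insert x (T.erase y)) := by
      intro y hy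
      have : V \ T.erase y = insert y (V \ T) := by
        ext z
        simp only [mem_sdiff, mem_erase, mem_insert]
        by_cases hz : z = y
        · subst hz; simp [hT hy]
        · simp [hz]
      rw [this, sum_insert (by simp [hy]), insert_erase hy]
    rw [sum_congr rfl this, sum_add_distrib, sum_const, nsmul_eq_mul]
  rw [h1, h2, sum_comm]
  ring

lemma sum_lower (V : Finset ℕ) (j : ℕ) (g : Finset ℕ → ℝ) :
    ∑ T ∈ V.powersetCard j, lower V g T = (j + 1) * ∑ S ∈ V.powersetCard (j + 1), g S := by
  have h := sum_lift_mul V j (fun _ => 1) g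
  simp only [one_mul] at h
  rw [← h, mul_sum]
  refine sum_congr rfl fun S hS => ?_
  simp [lift, (mem_powersetCard.1 hS).2]

lemma sum_lift (V : Finset ℕ) (j : ℕ) (g : Finset ℕ → ℝ) :
    ∑ S ∈ V.powersetCard (j + 1), lift g S
      = ((V.card - j : ℕ) : ℝ) * ∑ T ∈ V.powersetCard j, g T := by
  have h := sum_lift_mul V j g (fun _ => 1)
  simp only [mul_one] at h
  rw [h, mul_sum]
  refine sum_congr rfl fun T hT => ?_
  obtain ⟨hTV, hc⟩ := mem_powersetCard.1 hT
  simp [lower, card_sdiff_of_subset hTV, hc, mul_comm]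

/-- The one-step spectral gap. The commutation relation reduces level `j + 1` to a bound for `lower`
from level `j + 1` to level `j`, which has the same norm as its adjoint `lift`. -/
lemma lift_gap (V : Finset ℕ) (j : ℕ) (hj : j + 1 ≤ V.card) (g : Finset ℕ → ℝ)
    (hg : ∑ T ∈ V.powersetCard j, g T = 0) :
    ∑ S ∈ V.powersetCard (j + 1), lift g S ^ 2
      ≤ j * ((V.card : ℝ) - j - 1) * ∑ T ∈ V.powersetCard j, g T ^ 2 := by
  induction j generalizing g with
  | zero =>
    simp only [powersetCard_zero, sum_singleton] at hg
    simp only [Nat.cast_zero, zero_mul]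
    refine (sum_eq_zero fun S hS => ?_).le
    obtain ⟨x, rfl⟩ := card_eq_one.1 (mem_powersetCard.1 hS).2
    simp [lift, hg]
  | succ j ih =>
    have hj' : ((j : ℝ) + 1) + 1 ≤ V.card := by exact_mod_cast hj
    set N := ∑ T ∈ V.powersetCard (j + 1), g T ^ 2 with hN
    set D := ∑ T ∈ V.powersetCard j, lower V g T ^ 2 with hD
    have hN0 : 0 ≤ N := sum_nonneg fun _ _ => sq_nonneg _
    have hD0 : 0 ≤ D := sum_nonneg fun _ _ => sq_nonneg _
    have hDg : ∑ S ∈ V.powersetCard (j + 1), lift (lower V g) S * g S = D := by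
      rw [sum_lift_mul]
      simp only [hD, sq]
    have h1 : ∑ S ∈ V.powersetCard (j + 1 + 1), lift g S ^ 2
        = D + ((V.card : ℝ) - 2 * (j + 1)) * N := by
      simp only [sq (lift g _)]
      rw [sum_lift_mul, ← hDg, hN, mul_sum, ← sum_add_distrib]
      refine sum_congr rfl fun T hT => ?_
      obtain ⟨hTV, hc⟩ := mem_powersetCard.1 hT
      rw [lower_lift V T hTV, hc]
      push_cast
      ring
    have h2 := ih (by omega) (lower V g) (by rw [sum_lower, hg, mul_zero])
    have hμ : 0 ≤ (j : ℝ) * ((V.card : ℝ) - j - 1) :=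
      mul_nonneg (Nat.cast_nonneg _) (by linarith)
    have h3 : D ≤ j * ((V.card : ℝ) - j - 1) * N := by
      have cs := sum_mul_sq_le_sq_mul_sq (V.powersetCard (j + 1)) (lift (lower V g)) g
      rw [hDg] at cs
      rcases hD0.eq_or_lt with h | h
      · rw [← h]; exact mul_nonneg hμ hN0
      · refine le_of_mul_le_mul_left ?_ h
        calc D * D = D ^ 2 := by ring
          _ ≤ _ := cs
          _ ≤ (j * ((V.card : ℝ) - j - 1) * D) * N := mul_le_mul_of_nonneg_right h2 hN0
          _ = _ := by ring
    rw [h1]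
    push_cast
    linarith

/-- The inclusion operator from level `k`: the value at `S` is the sum of `g` over the `k`-subsets
of `S`. -/
def subsum (k : ℕ) (g : Finset ℕ → ℝ) (S : Finset ℕ) : ℝ := ∑ b ∈ S.powersetCard k, g b

/-- Each `k`-subset `b` of `S` survives the deletion of exactly `|S| - k` points of `S`. -/
lemma lift_subsum (k : ℕ) (g : Finset ℕ → ℝ) (S : Finset ℕ) :
    lift (subsum k g) S = ((S.card - k : ℕ) : ℝ) * subsum k g S := by
  unfold lift subsum
  rw [sum_comm' (t' := S.powersetCard k) (s' := fun b => S \ b), mul_sum]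
  · refine sum_congr rfl fun b hb => ?_
    obtain ⟨hbS, hc⟩ := mem_powersetCard.1 hb
    simp [card_sdiff_of_subset hbS, hc]
  · intro x b
    simp only [mem_powersetCard, mem_sdiff, subset_erase]
    tauto

/-- The gap of the inclusion operator from level `k = a + 1` to level `a + 1 + t`. The truncated
subtraction `|V| - (a + 2)` matters only for `|V| = a + 1`, where `t = 0` and the constant is `1`. -/
lemma iterated_gap (V : Finset ℕ) (a t : ℕ) (ht : a + 1 + t ≤ V.card) (g : Finset ℕ → ℝ)
    (hg : ∑ T ∈ V.powersetCard (a + 1), g T = 0) :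
    ∑ S ∈ V.powersetCard (a + 1 + t), subsum (a + 1) g S = 0 ∧
    ∑ S ∈ V.powersetCard (a + 1 + t), subsum (a + 1) g S ^ 2
      ≤ ((a + t).choose a : ℝ) * ((V.card - (a + 2)).choose t : ℝ)
        * ∑ T ∈ V.powersetCard (a + 1), g T ^ 2 := by
  induction t with
  | zero =>
    have : ∀ S ∈ V.powersetCard (a + 1), subsum (a + 1) g S = g S := by
      intro S hS
      have hc := (mem_powersetCard.1 hS).2
      rw [subsum, ← hc, powersetCard_self, sum_singleton]
    refine ⟨by rw [add_zero, sum_congr rfl this, hg], ?_⟩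
    simp only [add_zero, Nat.choose_self, Nat.choose_zero_right, Nat.cast_one, one_mul]
    exact (sum_congr rfl fun S hS => by rw [this S hS]).le
  | succ t ih =>
    obtain ⟨ih0, ih1⟩ := ih (by omega)
    set N := ∑ T ∈ V.powersetCard (a + 1), g T ^ 2
    have hlift : ∀ S ∈ V.powersetCard (a + 1 + t + 1),
        lift (subsum (a + 1) g) S = ((t : ℝ) + 1) * subsum (a + 1) g S := by
      intro S hS
      rw [lift_subsum, (mem_powersetCard.1 hS).2,
        show a + 1 + t + 1 - (a + 1) = t + 1 by omega]
      push_cast; rfl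
    have ht0 : (0 : ℝ) < (t : ℝ) + 1 := by positivity
    have hm := sum_lift V (a + 1 + t) (subsum (a + 1) g)
    rw [ih0, mul_zero, sum_congr rfl hlift, ← mul_sum] at hm
    refine ⟨(mul_eq_zero.1 hm).resolve_left ht0.ne', ?_⟩
    have hgap := lift_gap V (a + 1 + t) (by omega) _ ih0
    rw [sum_congr rfl fun S hS => by rw [hlift S hS, mul_pow], ← mul_sum] at hgap
    obtain ⟨r, hr⟩ : ∃ r, V.card = a + 2 + t + r := ⟨V.card - (a + 2 + t), by omega⟩
    rw [hr] at hgap ih1 ⊢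
    rw [show a + 2 + t + r - (a + 2) = t + r by omega] at ih1 ⊢
    have hc1 : ((a + (t + 1)).choose a : ℝ) * (t + 1) = ((a + t).choose a : ℝ) * (a + t + 1) := by
      have := Nat.choose_mul_succ_eq (a + t) a
      rw [show a + t + 1 - a = t + 1 by omega] at this
      rw [← add_assoc]
      exact_mod_cast this.symm
    have hc2 : ((t + r).choose (t + 1) : ℝ) * (t + 1) = ((t + r).choose t : ℝ) * r := by
      have := Nat.choose_succ_right_eq (t + r) t
      rw [show t + r - t = r by omega] at this
      exact_mod_cast this
    push_cast at hgap
    have hle : ((t : ℝ) + 1) ^ 2 * ∑ S ∈ V.powersetCard (a + 1 + t + 1), subsum (a + 1) g S ^ 2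
        ≤ ((t : ℝ) + 1) ^ 2 * (((a + (t + 1)).choose a : ℝ) * ((t + r).choose (t + 1) : ℝ) * N) := by
      calc _ ≤ _ := hgap
        _ = ((a + t + 1 : ℝ) * r) *
            ∑ S ∈ V.powersetCard (a + 1 + t), subsum (a + 1) g S ^ 2 := by ring
        _ ≤ ((a + t + 1 : ℝ) * r) *
            (((a + t).choose a : ℝ) * ((t + r).choose t : ℝ) * N) := by gcongr
        _ = (((a + t).choose a : ℝ) * (a + t + 1)) * (((t + r).choose t : ℝ) * r) * N := by ring
        _ = _ := by rw [← hc1, ← hc2]; ring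
    exact le_of_mul_le_mul_left hle (by positivity)

/-- The lower bound in terms of cardinalities, with `k = a + 1`, `|V| = n - 1 = 2a + 2 + r`, so
that `n - k = a + 2 + r`. It is Cauchy–Schwarz over `C` together with `iterated_gap` for
`1_B - β`. -/
lemma mixing (V : Finset ℕ) (a r : ℕ) (hV : V.card = 2 * a + 2 + r) (C B : Finset (Finset ℕ))
    (hC : C ⊆ V.powersetCard a) (hB : B ⊆ V.powersetCard (a + 1)) (β : ℝ)
    (hβ : β = (B.card : ℝ) / (V.card.choose (a + 1) : ℝ)) :
    (((C ×ˢ B).filter (fun p => Disjoint p.1 p.2)).card : ℝ)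
      ≥ C.card * ((a + 2 + r).choose (a + 1) : ℝ) * β
        - Real.sqrt (C.card * (((a + (r + 1)).choose a : ℝ) * ((a + r).choose (r + 1) : ℝ)
            * B.card)) := by
  classical
  have hNpos : (0 : ℝ) < (V.card.choose (a + 1) : ℝ) := by
    exact_mod_cast Nat.choose_pos (by omega)
  have hβN : β * (V.card.choose (a + 1) : ℝ) = B.card := by
    rw [hβ]; field_simp
  set g : Finset ℕ → ℝ := fun b => (if b ∈ B then 1 else 0) - β with hgdef
  have hsumB : ∑ T ∈ V.powersetCard (a + 1), (if T ∈ B then (1 : ℝ) else 0) = B.card := by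
    rw [sum_ite_mem, inter_eq_right.2 hB]; simp
  have hg : ∑ T ∈ V.powersetCard (a + 1), g T = 0 := by
    simp only [hgdef]
    rw [sum_sub_distrib, hsumB, sum_const, card_powersetCard, nsmul_eq_mul]
    linarith
  have hg2 : ∑ T ∈ V.powersetCard (a + 1), g T ^ 2 ≤ B.card := by
    have : ∀ T ∈ V.powersetCard (a + 1),
        g T ^ 2 = (if T ∈ B then (1 : ℝ) else 0) - β * g T - β * (if T ∈ B then (1 : ℝ) else 0) := by
      intro T _
      simp only [hgdef]
      split_ifs <;> ring
    rw [sum_congr rfl this, sum_sub_distrib, sum_sub_distrib, ← mul_sum, ← mul_sum, hg, hsumB]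
    have : 0 ≤ β := by rw [hβ]; positivity
    have : 0 ≤ β * B.card := by positivity
    linarith
  have hgap := (iterated_gap V a (r + 1) (by omega) g hg).2
  rw [hV, show 2 * a + 2 + r - (a + 2) = a + r by omega] at hgap
  have hval : ∀ c ∈ C, subsum (a + 1) g (V \ c)
      = ((B.filter (fun b => Disjoint c b)).card : ℝ) - ((a + 2 + r).choose (a + 1) : ℝ) * β := by
    intro c hc
    obtain ⟨hcV, hcc⟩ := mem_powersetCard.1 (hC hc)
    simp only [subsum, hgdef]
    rw [sum_sub_distrib, sum_const, card_powersetCard, nsmul_eq_mul, card_sdiff_of_subset hcV,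
      hV, hcc, show 2 * a + 2 + r - a = a + 2 + r by omega, sum_ite_mem]
    congr 1
    rw [sum_const, nsmul_eq_mul, mul_one]
    congr 2
    ext b
    simp only [mem_inter, mem_powersetCard, mem_filter, subset_sdiff]
    constructor
    · rintro ⟨⟨⟨_, h⟩, _⟩, hb⟩
      exact ⟨hb, h.symm⟩
    · rintro ⟨hb, h⟩
      obtain ⟨h1, h2⟩ := mem_powersetCard.1 (hB hb)
      exact ⟨⟨⟨h1, h.symm⟩, h2⟩, hb⟩
  have hcount : (((C ×ˢ B).filter (fun p => Disjoint p.1 p.2)).card : ℝ)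
      = ∑ c ∈ C, ((B.filter (fun b => Disjoint c b)).card : ℝ) := by
    rw [card_filter, sum_product]
    push_cast [card_filter]
    rfl
  have hsum : ∑ c ∈ C, subsum (a + 1) g (V \ c)
      = (((C ×ˢ B).filter (fun p => Disjoint p.1 p.2)).card : ℝ)
        - C.card * ((a + 2 + r).choose (a + 1) : ℝ) * β := by
    rw [sum_congr rfl hval, sum_sub_distrib, sum_const, nsmul_eq_mul, hcount]
    ring
  have hsub : ∑ c ∈ C, subsum (a + 1) g (V \ c) ^ 2
      ≤ ∑ S ∈ V.powersetCard (a + 1 + (r + 1)), subsum (a + 1) g S ^ 2 := by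
    have hinj : Set.InjOn (fun c => V \ c) (C : Set (Finset ℕ)) := by
      intro c hc d hd h
      have hcV := (mem_powersetCard.1 (hC hc)).1
      have hdV := (mem_powersetCard.1 (hC hd)).1
      simp only at h
      rw [← Finset.sdiff_sdiff_eq_self hcV, h, Finset.sdiff_sdiff_eq_self hdV]
    rw [← sum_image (f := fun S => subsum (a + 1) g S ^ 2) hinj]
    refine sum_le_sum_of_subset_of_nonneg ?_ fun _ _ _ => sq_nonneg _
    intro S hS
    obtain ⟨c, hc, rfl⟩ := mem_image.1 hS
    obtain ⟨hcV, hcc⟩ := mem_powersetCard.1 (hC hc)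
    refine mem_powersetCard.2 ⟨sdiff_subset, ?_⟩
    rw [card_sdiff_of_subset hcV, hV, hcc]
    omega
  have hcs : (∑ c ∈ C, subsum (a + 1) g (V \ c)) ^ 2
      ≤ C.card * (((a + (r + 1)).choose a : ℝ) * ((a + r).choose (r + 1) : ℝ) * B.card) := by
    refine (sq_sum_le_card_mul_sum_sq).trans ?_
    refine mul_le_mul_of_nonneg_left ?_ (Nat.cast_nonneg _)
    refine (hsub.trans hgap).trans ?_
    exact mul_le_mul_of_nonneg_left hg2 (by positivity)
  have := (abs_le.1 (Real.abs_le_sqrt hcs)).1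
  rw [hsum] at this
  linarith

/-- Expander Mixing Lemma applied to a star and its complement in the Kneser graph:
with the ground set `[n]` modelled as `range n` and the distinguished element `n`
modelled as `n-1`, let `C = {A \ {n-1} : A ∈ F, n-1 ∈ A}` have density `γ > 0` in
`C([n-1],k-1)` and `B = {A ∈ F : n-1 ∉ A}` have density `β` in `C([n-1],k)`. Then the
number of disjoint pairs `(c,b) ∈ C × B` is at least
`|C| · C(n-k,k) · (β - (k/(n-k))·√(β/γ))`. -/
theorem stmt_16 (n k : ℕ) (hn : 2 * k + 1 ≤ n)
    (F : Finset (Finset ℕ)) (hF : ∀ A ∈ F, A ⊆ Finset.range n ∧ A.card = k)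
    (C B : Finset (Finset ℕ))
    (hC : C = (F.filter (fun A => n - 1 ∈ A)).image (fun A => A.erase (n - 1)))
    (hB : B = F.filter (fun A => n - 1 ∉ A))
    (γ β : ℝ)
    (hγ : γ = (C.card : ℝ) / ((n - 1).choose (k - 1) : ℝ)) (hγpos : 0 < γ)
    (hβ : β = (B.card : ℝ) / ((n - 1).choose k : ℝ)) :
    (((C ×ˢ B).filter (fun p => Disjoint p.1 p.2)).card : ℝ)
      ≥ (C.card : ℝ) * ((n - k).choose k : ℝ)
          * (β - (k : ℝ) / ((n : ℝ) - k) * Real.sqrt (β / γ)) := by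
  have hmem : ∀ A ∈ F, ∀ x ∈ A, x ≠ n - 1 → x ∈ range (n - 1) := by
    intro A hA x hx hne
    have := mem_range.1 ((hF A hA).1 hx)
    rw [mem_range]
    omega
  have hCV : C ⊆ (range (n - 1)).powersetCard (k - 1) := by
    intro c hc
    rw [hC] at hc
    obtain ⟨A, hA, rfl⟩ := mem_image.1 hc
    obtain ⟨hA, hnA⟩ := mem_filter.1 hA
    refine mem_powersetCard.2 ⟨fun x hx => ?_, by rw [card_erase_of_mem hnA, (hF A hA).2]⟩
    obtain ⟨h1, h2⟩ := mem_erase.1 hx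
    exact hmem A hA x h2 h1
  have hBV : B ⊆ (range (n - 1)).powersetCard k := by
    intro A hA
    rw [hB] at hA
    obtain ⟨hA, hnA⟩ := mem_filter.1 hA
    refine mem_powersetCard.2 ⟨fun x hx => hmem A hA x hx ?_, (hF A hA).2⟩
    rintro rfl
    exact hnA hx
  have hCpos : (0 : ℝ) < C.card := by
    rcases (Nat.cast_nonneg C.card : (0 : ℝ) ≤ C.card).eq_or_lt with h | h
    · rw [hγ, ← h, zero_div] at hγpos
      exact absurd hγpos (lt_irrefl _)
    · exact h
  obtain ⟨c, hc⟩ := card_pos.1 (Nat.cast_pos.1 hCpos)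
  have hk : k ≠ 0 := by
    rw [hC] at hc
    obtain ⟨A, hA, _⟩ := mem_image.1 hc
    obtain ⟨hA, hnA⟩ := mem_filter.1 hA
    rw [← (hF A hA).2]
    exact (card_pos.2 ⟨_, hnA⟩).ne'
  obtain ⟨a, rfl⟩ := Nat.exists_eq_succ_of_ne_zero hk
  obtain ⟨r, rfl⟩ : ∃ r, n = 2 * (a + 1) + 1 + r := ⟨n - (2 * (a + 1) + 1), by omega⟩
  simp only [Nat.succ_eq_add_one, Nat.add_sub_cancel] at *
  rw [show 2 * (a + 1) + 1 + r - 1 = 2 * a + 2 + r by omega] at *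
  rw [show 2 * (a + 1) + 1 + r - (a + 1) = a + 2 + r by omega]
  have hmix := mixing (range (2 * a + 2 + r)) a r (card_range _) C B hCV hBV β
    (by rw [card_range]; exact hβ)
  refine le_trans ?_ hmix
  have hcast : ((2 * (a + 1) + 1 + r : ℕ) : ℝ) - ((a + 1 : ℕ) : ℝ) = a + 2 + r := by
    push_cast; ring
  rw [hcast]
  set κ : ℝ := ((a + 1 : ℕ) : ℝ) / (a + 2 + r) with hκ
  have hd : (0 : ℝ) < a + 2 + r := by positivity
  have hκ0 : 0 < κ := by positivity
  set d : ℝ := ((a + 2 + r).choose (a + 1) : ℝ) with hddef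
  set N : ℝ := ((2 * a + 2 + r).choose (a + 1) : ℝ) with hNdef
  have hNpos : 0 < N := by
    rw [hNdef]; exact_mod_cast Nat.choose_pos (by omega)
  have hN1 : ((2 * a + 2 + r).choose a : ℝ) = κ * N := by
    have := Nat.choose_succ_right_eq (2 * a + 2 + r) a
    rw [show 2 * a + 2 + r - a = a + 2 + r by omega] at this
    have h : N * (a + 1) = ((2 * a + 2 + r).choose a : ℝ) * (a + 2 + r) := by
      rw [hNdef]; exact_mod_cast this
    rw [hκ]
    push_cast
    field_simp
    linarith
  have hd1 : ((a + (r + 1)).choose a : ℝ) = κ * d := by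
    have := Nat.add_one_mul_choose_eq (a + (r + 1)) a
    rw [show a + (r + 1) + 1 = a + 2 + r by omega] at this
    have h : ((a : ℝ) + 2 + r) * ((a + (r + 1)).choose a : ℝ) = d * (a + 1) := by
      rw [hddef]; exact_mod_cast this
    rw [hκ]
    push_cast
    field_simp
    linarith
  have hd2 : ((a + r).choose (r + 1) : ℝ) ≤ κ * ((a + (r + 1)).choose a : ℝ) := by
    -- The exact ratio is `a / (a + r + 1)`, which is at most `κ = (a + 1) / (a + r + 2)`.
    have := Nat.choose_mul_succ_eq (a + r) (r + 1)
    rw [show a + r + 1 - (r + 1) = a by omega, show a + r + 1 = a + (r + 1) by omega,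
      ← Nat.choose_symm_add] at this
    have h : ((a + r).choose (r + 1) : ℝ) * (a + (r + 1)) = ((a + (r + 1)).choose a : ℝ) * a := by
      exact_mod_cast this
    have hX : (0 : ℝ) ≤ ((a + (r + 1)).choose a : ℝ) := Nat.cast_nonneg _
    have he : (0 : ℝ) < a + (r + 1) := by positivity
    rw [hκ, div_mul_eq_mul_div, le_div_iff₀ hd]
    refine le_of_mul_le_mul_right ?_ he
    calc ((a + r).choose (r + 1) : ℝ) * (a + 2 + r) * (a + (r + 1))
        = (((a + r).choose (r + 1) : ℝ) * (a + (r + 1))) * (a + 2 + r) := by ring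
      _ = ((a + (r + 1)).choose a : ℝ) * (a * (a + 2 + r)) := by rw [h]; ring
      _ ≤ ((a + (r + 1)).choose a : ℝ) * ((a + 1) * (a + (r + 1))) := by
        refine mul_le_mul_of_nonneg_left ?_ hX
        have : (0 : ℝ) ≤ r := Nat.cast_nonneg _
        nlinarith
      _ = _ := by push_cast; ring
  have hratio : β / γ = κ * (B.card / C.card) := by
    rw [hβ, hγ, hN1]
    field_simp
  have hd0 : 0 ≤ d := Nat.cast_nonneg _
  have hkey : Real.sqrt (C.card * (((a + (r + 1)).choose a : ℝ) * ((a + r).choose (r + 1) : ℝ)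
      * B.card)) ≤ C.card * d * κ * Real.sqrt (β / γ) := by
    rw [hratio]
    refine Real.sqrt_le_iff.2 ⟨by positivity, ?_⟩
    rw [mul_pow, Real.sq_sqrt (by positivity)]
    rw [hd1] at hd2 ⊢
    calc (C.card : ℝ) * (κ * d * ((a + r).choose (r + 1) : ℝ) * B.card)
        ≤ (C.card : ℝ) * (κ * d * (κ * (κ * d)) * B.card) := by gcongr
      _ = _ := by field_simp
  linarith
end

section
/- Let n ≥ 12ks with s ≥ 1, k ≥ 1, and let λ ∈ [s, s+1] be such that m = binom(n,k) - binom(n-s,k) + (λ-s)·binom(n-s-1,k-1) is an integer. Then there exists a family F ⊆ binom([n],k) with |F| = m such that the maximum degree of the subgraph of K(n,k) induced by F is at most (s·λ/(s+1) + 4·s·(k/n))·binom(n-k-1,k-1). -/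
/-!
Write `S = [s+1]`, `μ = λ/(s+1)`, `M = C(n-k-1, k-1)` and `M' = C(n-s-k, k-1)`. By Pascal's rule
`m = |G| + λ·C(n-s-1, k-1)`, where `G` is the family of all `k`-sets meeting `S` at least twice
(`card_two_le`). With `t` as in the construction, the family `H` of the `k`-sets `B ⊆ [t]` meeting
`S` exactly once has at least `λ·C(n-s-1, k-1)` members, so `F` is `G` together with a subfamily
of `H` of the right size; it does not matter which.

For fixed `x ∉ A` there are exactly `M` sets `B ∋ x` disjoint from `A`, so `A` has at most
`|S \ A|·M` neighbours meeting `S` (`card_meet_le`). If `A ∈ G` this is at most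
`(s-1)·M ≤ s·μ·M`, because `μ ≥ s/(s+1)`. If `A ∈ H`, it is at most `s·M`, and among the sets
counted, `s·M'` meet `S` exactly once while only `s·C(t-s-k, k-1)` of these lie inside `[t]`. Thus
the degree is at most `s·(M - M' + C(t-s-k, k-1))`. Minimality of `t` and the monotonicity
of `x ↦ C(b-x, q)/C(c-x, q)` for `b ≤ c` (`choose_ratio`, `exists_threshold`) give
`C(t-s-k, k-1) ≤ μ·(1 + 2k/n)·M'`, and
`M - M' ≤ (s-1)·(2k/n)·M`; since `1 - μ ≤ 1/(s+1)`, the two errors add up to at most `4k/n·M`.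

For `k = 1` minimality of `t` carries no information, but then `m = λ` and any `m` singletons work.
-/

open Finset

/-- A `k`-subset of `P ∪ R` meeting `P` exactly once is a point of `P` together with a
`(k-1)`-subset of `R`. -/
lemma card_inter_eq_one (P R : Finset ℕ) (hPR : Disjoint P R) (k : ℕ) (hk : 1 ≤ k) :
    ((powersetCard k (P ∪ R)).filter (fun B => (B ∩ P).card = 1)).card
      = P.card * (R.card).choose (k - 1) := by
  rw [← card_powersetCard, ← card_product]
  symm
  refine card_bij (fun x _ => insert x.1 x.2) ?_ ?_ ?_
  · rintro ⟨p, Q⟩ h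
    simp only [mem_product, mem_powersetCard, mem_filter] at h ⊢
    obtain ⟨hp, hQ, hc⟩ := h
    have hpQ : p ∉ Q := fun h => disjoint_left.1 hPR hp (hQ h)
    refine ⟨⟨?_, ?_⟩, ?_⟩
    · intro x hx
      rcases mem_insert.1 hx with rfl | hx
      · exact mem_union_left _ hp
      · exact mem_union_right _ (hQ hx)
    · rw [card_insert_of_notMem hpQ, hc]; omega
    · rw [insert_inter_of_mem hp, disjoint_iff_inter_eq_empty.1 (hPR.symm.mono_left hQ)]
      simp
  · rintro ⟨p, Q⟩ h ⟨p', Q'⟩ h' he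
    simp only [mem_product, mem_powersetCard] at h h' he
    obtain ⟨hp, hQ, -⟩ := h
    obtain ⟨hp', hQ', -⟩ := h'
    have hpQ : p ∉ Q := fun h => disjoint_left.1 hPR hp (hQ h)
    have hpQ' : p ∉ Q' := fun h => disjoint_left.1 hPR hp (hQ' h)
    have h1 : p ∈ insert p' Q' := he ▸ mem_insert_self p Q
    have h2 : p = p' := (mem_insert.1 h1).resolve_right hpQ'
    subst h2
    rw [← erase_insert hpQ, he, erase_insert hpQ']
  · intro B hB
    simp only [mem_filter, mem_powersetCard] at hB
    obtain ⟨⟨hB, hc⟩, h1⟩ := hB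
    obtain ⟨p, hp⟩ := card_eq_one.1 h1
    have hpm : p ∈ B ∩ P := hp ▸ mem_singleton_self p
    obtain ⟨hpB, hpP⟩ := mem_inter.1 hpm
    refine ⟨(p, B.erase p), ?_, insert_erase hpB⟩
    simp only [mem_product, mem_powersetCard]
    refine ⟨hpP, ?_, by rw [card_erase_of_mem hpB, hc]⟩
    intro x hx
    obtain ⟨hxp, hxB⟩ := mem_erase.1 hx
    refine (mem_union.1 (hB hxB)).resolve_left fun hxP => hxp ?_
    exact mem_singleton.1 (hp ▸ mem_inter.2 ⟨hxB, hxP⟩)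

lemma card_disjoint_inter_eq_one (S A : Finset ℕ) (u k : ℕ) (hk : 1 ≤ k) (hS : S ⊆ range u) :
    ((powersetCard k (range u)).filter (fun B => Disjoint A B ∧ (B ∩ S).card = 1)).card
      = (S \ A).card * (((range u \ S) \ A).card).choose (k - 1) := by
  have hd : Disjoint (S \ A) ((range u \ S) \ A) :=
    (disjoint_sdiff (s := S) (t := range u)).mono sdiff_subset sdiff_subset
  rw [← card_inter_eq_one _ _ hd k hk]
  congr 1
  have hU : S \ A ∪ (range u \ S) \ A = range u \ A := by
    rw [← union_sdiff_distrib, union_sdiff_of_subset hS]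
  rw [hU]
  ext B
  simp only [mem_filter, mem_powersetCard, subset_sdiff]
  have key : Disjoint A B → B ∩ (S \ A) = B ∩ S := by
    intro h
    ext x
    simp only [mem_inter, mem_sdiff]
    exact ⟨fun h => ⟨h.1, h.2.1⟩, fun h' => ⟨h'.1, h'.2, fun hA => disjoint_left.1 h hA h'.1⟩⟩
  constructor
  · rintro ⟨⟨a, b⟩, c, d⟩
    exact ⟨⟨⟨a, c.symm⟩, b⟩, by rw [key c]; exact d⟩
  · rintro ⟨⟨⟨a, c⟩, b⟩, d⟩
    exact ⟨⟨a, b⟩, c.symm, by rw [← key c.symm]; exact d⟩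

/-- Union bound over the points of `S \ A` at which a set disjoint from `A` can meet `S`. -/
lemma card_meet_le (S A : Finset ℕ) (n k : ℕ) (hk : 1 ≤ k) (hS : S ⊆ range n)
    (hA : A ∈ powersetCard k (range n)) :
    ((powersetCard k (range n)).filter (fun B => Disjoint A B ∧ 1 ≤ (B ∩ S).card)).card
      ≤ (S \ A).card * (n - k - 1).choose (k - 1) := by
  obtain ⟨hAn, hAk⟩ := mem_powersetCard.1 hA
  refine le_trans (card_le_card (t := (S \ A).biUnion fun x =>
    (powersetCard k (range n)).filter (fun B => Disjoint A B ∧ (B ∩ {x}).card = 1)) ?_) ?_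
  · intro B hB
    simp only [mem_filter] at hB
    obtain ⟨hB, hd, h1⟩ := hB
    obtain ⟨x, hx⟩ := card_pos.1 h1
    obtain ⟨hxB, hxS⟩ := mem_inter.1 hx
    simp only [mem_biUnion, mem_filter]
    refine ⟨x, mem_sdiff.2 ⟨hxS, fun h => disjoint_left.1 hd h hxB⟩, hB, hd, ?_⟩
    rw [inter_singleton_of_mem hxB]; simp
  · refine card_biUnion_le_card_mul _ _ _ fun x hx => ?_
    obtain ⟨hxS, hxA⟩ := mem_sdiff.1 hx
    have hxn : {x} ⊆ range n := singleton_subset_iff.2 (hS hxS)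
    rw [card_disjoint_inter_eq_one _ _ _ _ hk hxn]
    have h1 : ({x} : Finset ℕ) \ A = {x} := by
      rw [Finset.sdiff_eq_self_iff_disjoint]; simpa using hxA
    have h2 : ((range n \ {x}) \ A).card = n - k - 1 := by
      rw [sdiff_sdiff_comm, card_sdiff_of_subset, card_sdiff_of_subset hAn]
      · simp [hAk]
      · rw [singleton_subset_iff, mem_sdiff]; exact ⟨hS hxS, hxA⟩
    rw [h1, h2]; simp

/-- The number of `k`-subsets of `[n]` meeting `[s+1]` at least twice, up to rearrangement. -/
lemma card_two_le (n k s : ℕ) (hk : 1 ≤ k) (hsn : s + 1 ≤ n) :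
    ((powersetCard k (range n)).filter (fun B => 2 ≤ (B ∩ range (s + 1)).card)).card
      + (n - s).choose k + s * (n - s - 1).choose (k - 1) = n.choose k := by
  have hS : range (s + 1) ⊆ range n := range_subset_range.2 hsn
  have h1 := card_disjoint_inter_eq_one (range (s + 1)) ∅ n k hk hS
  simp only [disjoint_empty_left, true_and, sdiff_empty, card_range,
    card_sdiff_of_subset hS] at h1
  have h0 : ((powersetCard k (range n)).filter (fun B => (B ∩ range (s + 1)).card = 0)).card
      = (n - (s + 1)).choose k := by
    have : (powersetCard k (range n)).filter (fun B => (B ∩ range (s + 1)).card = 0)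
        = powersetCard k (range n \ range (s + 1)) := by
      ext B
      simp only [mem_filter, mem_powersetCard, subset_sdiff, card_eq_zero,
        disjoint_iff_inter_eq_empty]
      tauto
    rw [this, card_powersetCard, card_sdiff_of_subset hS]; simp
  have e1 := card_filter_add_card_filter_not (s := powersetCard k (range n))
    (fun B => 2 ≤ (B ∩ range (s + 1)).card)
  have e2 := card_filter_add_card_filter_not
    (s := (powersetCard k (range n)).filter (fun B => ¬ 2 ≤ (B ∩ range (s + 1)).card))
    (fun B => (B ∩ range (s + 1)).card = 1)
  rw [filter_filter, filter_filter] at e2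
  have f1 : (powersetCard k (range n)).filter
      (fun B => ¬ 2 ≤ (B ∩ range (s + 1)).card ∧ (B ∩ range (s + 1)).card = 1)
      = (powersetCard k (range n)).filter (fun B => (B ∩ range (s + 1)).card = 1) :=
    filter_congr fun B _ => by omega
  have f2 : (powersetCard k (range n)).filter
      (fun B => ¬ 2 ≤ (B ∩ range (s + 1)).card ∧ ¬ (B ∩ range (s + 1)).card = 1)
      = (powersetCard k (range n)).filter (fun B => (B ∩ range (s + 1)).card = 0) :=
    filter_congr fun B _ => by omega
  rw [f1, f2, h0, h1] at e2
  rw [card_powersetCard, card_range] at e1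
  obtain ⟨j, rfl⟩ : ∃ j, k = j + 1 := ⟨k - 1, by omega⟩
  obtain ⟨a, rfl⟩ : ∃ a, n = a + (s + 1) := ⟨n - (s + 1), by omega⟩
  have e3 : a + (s + 1) - s = a + 1 := by omega
  rw [e3, Nat.choose_succ_succ]
  simp only [Nat.add_sub_cancel] at *
  linarith

lemma choose_ratio_step (q b c : ℕ) (hbc : b ≤ c) :
    b.choose q * (c + 1).choose q ≤ (b + 1).choose q * c.choose q := by
  rcases Nat.lt_or_ge b q with h | h
  · rw [Nat.choose_eq_zero_of_lt h]; simp
  have h1 := Nat.choose_mul_succ_eq b q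
  have h2 := Nat.choose_mul_succ_eq c q
  refine Nat.le_of_mul_le_mul_right (c := (b + 1) * (c + 1)) ?_ (by positivity)
  calc b.choose q * (c + 1).choose q * ((b + 1) * (c + 1))
      = (b.choose q * (b + 1)) * ((c + 1).choose q * (c + 1)) := by ring
    _ = ((b + 1).choose q * (c + 1).choose q) * ((b + 1 - q) * (c + 1)) := by rw [h1]; ring
    _ ≤ ((b + 1).choose q * (c + 1).choose q) * ((b + 1) * (c + 1 - q)) := by
        refine Nat.mul_le_mul_left _ ?_
        zify [show q ≤ b + 1 by omega, show q ≤ c + 1 by omega]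
        nlinarith [mul_nonneg (Int.natCast_nonneg q) (sub_nonneg.2 (Int.ofNat_le.2 hbc))]
    _ = ((b + 1).choose q * (b + 1)) * ((c + 1).choose q * (c + 1 - q)) := by ring
    _ = _ := by rw [← h2]; ring

/-- For `b ≤ c` the ratio `C(b-x, q) / C(c-x, q)` is non-increasing in `x`. -/
lemma choose_ratio (q b c x : ℕ) (hbc : b ≤ c) (hq : q + x ≤ c) :
    (b - x).choose q * c.choose q ≤ b.choose q * (c - x).choose q := by
  induction x with
  | zero => simp
  | succ x ih =>
    specialize ih (by omega)
    rcases Nat.lt_or_ge x b with h | h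
    · have h3 := choose_ratio_step q (b - (x + 1)) (c - (x + 1)) (by omega)
      rw [show b - (x + 1) + 1 = b - x by omega, show c - (x + 1) + 1 = c - x by omega] at h3
      have hpos : 0 < (c - x).choose q := Nat.choose_pos (by omega)
      refine Nat.le_of_mul_le_mul_right (c := (c - x).choose q) ?_ hpos
      calc _ = ((b - (x + 1)).choose q * (c - x).choose q) * c.choose q := by ring
        _ ≤ ((b - x).choose q * (c - (x + 1)).choose q) * c.choose q :=
          Nat.mul_le_mul_right _ h3
        _ = ((b - x).choose q * c.choose q) * (c - (x + 1)).choose q := by ring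
        _ ≤ (b.choose q * (c - x).choose q) * (c - (x + 1)).choose q :=
          Nat.mul_le_mul_right _ ih
        _ = _ := by ring
    · rcases Nat.eq_zero_or_pos q with rfl | hq0
      · simp
      · rw [show b - (x + 1) = 0 by omega, Nat.choose_eq_zero_of_lt hq0]; simp

lemma choose_le_sub (c q x : ℕ) (hx : x ≤ c) :
    (c.choose (q + 1)) ≤ (c - x).choose (q + 1) + x * (c - 1).choose q := by
  induction x with
  | zero => simp
  | succ x ih =>
    specialize ih (by omega)
    have h : c - x = (c - (x + 1)) + 1 := by omega
    rw [h, Nat.choose_succ_succ] at ih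
    have : (c - (x + 1)).choose q ≤ (c - 1).choose q := Nat.choose_le_choose q (by omega)
    linarith

/-- The choice of `t = u + s + 1`, with `a = n - s - 1` and `q = k - 1`. The last inequality
follows from minimality, that is, from `C(u-1, q) < μ·C(a, q)`. -/
lemma exists_threshold (a q : ℕ) (hq : 1 ≤ q) (hqa : 2 * q ≤ a) (μ : ℝ) (h0 : 0 < μ)
    (h1 : μ ≤ 1) :
    ∃ u ≤ a, μ * (a.choose q : ℝ) ≤ (u.choose q : ℝ) ∧
      ((u - q).choose q : ℝ) * ((a : ℝ) - q) ≤ μ * ((a - q).choose q : ℝ) * a := by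
  classical
  have hN : 0 < a.choose q := Nat.choose_pos (by omega)
  have hN' : (0 : ℝ) < a.choose q := by exact_mod_cast hN
  have hex : ∃ u : ℕ, μ * (a.choose q : ℝ) ≤ (u.choose q : ℝ) := ⟨a, by nlinarith⟩
  have hle : Nat.find hex ≤ a := Nat.find_min' hex (by nlinarith)
  have hspec := Nat.find_spec hex
  have hmin : ∀ v < Nat.find hex, ¬ _ := fun v hv => Nat.find_min hex hv
  generalize Nat.find hex = u at *
  refine ⟨u, hle, hspec, ?_⟩
  rcases Nat.eq_zero_or_pos u with rfl | hu
  · rw [Nat.choose_eq_zero_of_lt (show 0 < q by omega)] at hspec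
    have : 0 < μ * (a.choose q : ℝ) := by positivity
    push_cast at hspec; linarith
  obtain ⟨v, rfl⟩ : ∃ v, u = v + 1 := ⟨u - 1, by omega⟩
  obtain ⟨b, rfl⟩ : ∃ b, a = b + 1 := ⟨a - 1, by omega⟩
  have hv := not_le.1 (hmin v (by omega))
  have hr := choose_ratio q v b (q - 1) (by omega) (by omega)
  rw [show v - (q - 1) = v + 1 - q by omega, show b - (q - 1) = b + 1 - q by omega] at hr
  have hs : (b.choose q : ℝ) * (b + 1) = (b + 1).choose q * ((b : ℝ) + 1 - q) := by
    have := Nat.choose_mul_succ_eq b q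
    have h2 : ((b + 1 - q : ℕ) : ℝ) = (b : ℝ) + 1 - q := by
      rw [Nat.cast_sub (by omega)]; push_cast; ring
    rw [← h2]; exact_mod_cast this
  have hr' : ((v + 1 - q).choose q : ℝ) * b.choose q ≤ v.choose q * (b + 1 - q).choose q := by
    exact_mod_cast hr
  push_cast
  refine le_of_mul_le_mul_left ?_ hN'
  calc ((b + 1).choose q : ℝ) * (((v + 1 - q).choose q : ℝ) * ((b : ℝ) + 1 - q))
      = ((v + 1 - q).choose q : ℝ) * b.choose q * (b + 1) := by
        rw [mul_assoc _ (b.choose q : ℝ), hs]; ring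
    _ ≤ v.choose q * (b + 1 - q).choose q * (b + 1) := by gcongr
    _ ≤ (μ * ((b + 1).choose q : ℝ)) * (b + 1 - q).choose q * (b + 1) := by gcongr
    _ = _ := by ring

/-- The numerical estimate bounding the degree of a member of `F` meeting `[s+1]` once;
`T` stands for `C(t-s-k, k-1)`, and `q = k - 1`. -/
lemma degree_estimate (n q s : ℕ) (hq : 1 ≤ q) (hs : 1 ≤ s) (hn : 12 * (q + 1) * s ≤ n)
    (μ : ℝ) (hμ1 : μ ≤ 1) (hμs : (s : ℝ) ≤ μ * (s + 1)) (T : ℝ)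
    (hT : T * ((n - s - 1 : ℕ) - (q : ℝ)) ≤
      μ * ((n - s - 1 - q).choose q : ℝ) * (n - s - 1 : ℕ)) :
    (s : ℝ) * (n - (q + 1) - 1).choose q - s * (n - s - 1 - q).choose q + s * T
      ≤ (s * μ + 4 * s * (((q + 1 : ℕ) : ℝ) / n)) * (n - (q + 1) - 1).choose q := by
  have hA : 12 * (q + 1) ≤ 12 * (q + 1) * s := Nat.le_mul_of_pos_right _ hs
  have hB : 12 * (2 * s) ≤ 12 * (q + 1) * s := by nlinarith
  have hn1 : n - s - 1 - q = (n - (q + 1) - 1) - (s - 1) := by omega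
  have hMM : (n - s - 1 - q).choose q ≤ (n - (q + 1) - 1).choose q :=
    Nat.choose_le_choose q (by omega)
  have hdiff : (n - (q + 1) - 1).choose q ≤ (n - s - 1 - q).choose q
      + (s - 1) * (n - (q + 1) - 1 - 1).choose (q - 1) := by
    have := choose_le_sub (n - (q + 1) - 1) (q - 1) (s - 1) (by omega)
    rw [← hn1, show q - 1 + 1 = q by omega] at this
    exact this
  have hQ : (n - (q + 1) - 1 - 1).choose (q - 1) * (n - (q + 1) - 1)
      = (n - (q + 1) - 1).choose q * q := by
    have := Nat.add_one_mul_choose_eq (n - (q + 1) - 1 - 1) (q - 1)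
    rw [show n - (q + 1) - 1 - 1 + 1 = n - (q + 1) - 1 by omega,
      show q - 1 + 1 = q by omega] at this
    linarith
  have hc : n ≤ 2 * (n - (q + 1) - 1) := by omega
  have ha : n ≤ 2 * (n - s - 1 - q) := by omega
  have hcast : ((n - s - 1 - q : ℕ) : ℝ) = ((n - s - 1 : ℕ) : ℝ) - q := by
    rw [Nat.cast_sub (by omega)]
  have hs1 : ((s - 1 : ℕ) : ℝ) = (s : ℝ) - 1 := by rw [Nat.cast_sub hs]; simp
  have ha' : (n : ℝ) ≤ 2 * (((n - s - 1 : ℕ) : ℝ) - q) := by rw [← hcast]; exact_mod_cast ha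
  have hc' : (n : ℝ) ≤ 2 * ((n - (q + 1) - 1 : ℕ) : ℝ) := by exact_mod_cast hc
  have hn0 : (0 : ℝ) < n := by
    have : 0 < n := by omega
    exact_mod_cast this
  have hMM' : ((n - s - 1 - q).choose q : ℝ) ≤ (n - (q + 1) - 1).choose q := by
    exact_mod_cast hMM
  have hdiff' : ((n - (q + 1) - 1).choose q : ℝ) ≤ (n - s - 1 - q).choose q
      + ((s : ℝ) - 1) * (n - (q + 1) - 1 - 1).choose (q - 1) := by
    rw [← hs1]; exact_mod_cast hdiff
  have hQ' : ((n - (q + 1) - 1 - 1).choose (q - 1) : ℝ) * (n - (q + 1) - 1 : ℕ)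
      = (n - (q + 1) - 1).choose q * q := by exact_mod_cast hQ
  have hs' : (1 : ℝ) ≤ s := by exact_mod_cast hs
  have hM0 : (0 : ℝ) ≤ (n - (q + 1) - 1).choose q := Nat.cast_nonneg _
  have hM0' : (0 : ℝ) ≤ (n - s - 1 - q).choose q := Nat.cast_nonneg _
  have hQ0 : (0 : ℝ) ≤ (n - (q + 1) - 1 - 1).choose (q - 1) := Nat.cast_nonneg _
  have hq0 : (0 : ℝ) ≤ q := Nat.cast_nonneg _
  push_cast
  generalize ((n - (q + 1) - 1).choose q : ℝ) = M at *
  generalize ((n - s - 1 - q).choose q : ℝ) = M' at *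
  generalize ((n - (q + 1) - 1 - 1).choose (q - 1) : ℝ) = Q at *
  generalize ((n - s - 1 : ℕ) : ℝ) = a at *
  generalize ((n - (q + 1) - 1 : ℕ) : ℝ) = c at *
  generalize (n : ℝ) = N at *
  generalize (s : ℝ) = σ at *
  generalize (q : ℝ) = p at *
  clear hn hA hB hn1 hMM hdiff hQ hc ha hcast hs1
  have hμ0 : 0 ≤ μ := by
    by_contra h
    nlinarith
  set ε := (p + 1) / N with hε
  have hε0 : 0 ≤ ε := by positivity
  have hεN : ε * N = p + 1 := by rw [hε]; field_simp
  have haq : 0 < a - p := by linarith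
  -- `Q ≤ 2εM`, so that `M - M' ≤ (s-1)·2εM`
  have hQε : Q ≤ 2 * ε * M := by
    refine le_of_mul_le_mul_right (?_ : Q * c ≤ _ * c) (by linarith)
    rw [hQ']
    have : p ≤ 2 * ε * c := by nlinarith
    nlinarith
  have hTε : T ≤ μ * M' * (1 + 2 * ε) := by
    refine le_of_mul_le_mul_right (hT.trans ?_) haq
    have : a ≤ (1 + 2 * ε) * (a - p) := by nlinarith
    nlinarith [mul_nonneg hμ0 hM0']
  have h1 : (1 - μ) * (M - M') ≤ 2 * ε * M := by
    have h2 : M - M' ≤ (σ - 1) * (2 * ε * M) := by nlinarith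
    have h3 : (1 - μ) * (σ - 1) ≤ 1 := by nlinarith
    have h4 : 0 ≤ 2 * ε * M := by positivity
    nlinarith
  have h2 : μ * M' * (2 * ε) ≤ 2 * ε * M := by
    have : μ * M' ≤ M := by nlinarith
    nlinarith
  have : M - M' + T ≤ (μ + 4 * ε) * M := by nlinarith
  nlinarith

/-- Explicit construction: for `n ≥ 12ks` and any size parameter `λ ∈ [s, s+1]` whose
corresponding size `m = C(n,k) - C(n-s,k) + (λ-s)·C(n-s-1,k-1)` is an integer, there is a
family `F` of `k`-subsets of `[n]` with `|F| = m` whose induced subgraph in the Kneser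
graph has maximum degree at most `(s·λ/(s+1) + 4·s·(k/n))·C(n-k-1,k-1)`. -/
theorem stmt_19 (n k s : ℕ) (hk : 1 ≤ k) (hs : 1 ≤ s) (hn : 12 * k * s ≤ n)
    (lam : ℝ) (hlam₁ : (s : ℝ) ≤ lam) (hlam₂ : lam ≤ (s : ℝ) + 1)
    (m : ℕ)
    (hm : (m : ℝ) = (n.choose k : ℝ) - ((n - s).choose k : ℝ)
        + (lam - s) * ((n - s - 1).choose (k - 1) : ℝ)) :
    ∃ F : Finset (Finset ℕ), F ⊆ Finset.powersetCard k (Finset.range n) ∧ F.card = m ∧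
      ∀ A ∈ F, ((F.filter (fun B => Disjoint A B)).card : ℝ)
        ≤ ((s : ℝ) * lam / ((s : ℝ) + 1) + 4 * (s : ℝ) * ((k : ℝ) / n))
            * ((n - k - 1).choose (k - 1) : ℝ) := by
  have hA : 12 * k ≤ 12 * k * s := Nat.le_mul_of_pos_right _ hs
  have hB : 12 * s ≤ 12 * k * s := by nlinarith
  have hs' : (1 : ℝ) ≤ s := by exact_mod_cast hs
  have hs0 : (0 : ℝ) < (s : ℝ) + 1 := by linarith
  rcases Nat.eq_or_lt_of_le hk with rfl | hk2
  · have hml : (m : ℝ) = lam := by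
      rw [hm, Nat.choose_one_right, Nat.choose_one_right, Nat.cast_sub (by omega)]
      simp
    have hms : m ≤ s + 1 := by
      have : (m : ℝ) ≤ ((s + 1 : ℕ) : ℝ) := by push_cast; linarith
      exact_mod_cast this
    refine ⟨powersetCard 1 (range m), powersetCard_mono (range_subset_range.2 (by omega)),
      by simp, fun A hA => ?_⟩
    have hcard : ((powersetCard 1 (range m)).filter (fun B => Disjoint A B)).card + 1 ≤ m := by
      have h1 : (powersetCard 1 (range m)).filter (fun B => Disjoint A B)
          ⊆ (powersetCard 1 (range m)).erase A := by
        intro B hB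
        obtain ⟨hB, hd⟩ := mem_filter.1 hB
        refine mem_erase.2 ⟨?_, hB⟩
        rintro rfl
        have := (mem_powersetCard.1 hA).2
        rw [disjoint_self] at hd
        simp [hd] at this
      have h2 := card_le_card h1
      have h3 := card_erase_add_one hA
      simp only [card_powersetCard, card_range, Nat.choose_one_right] at h3
      omega
    have hcard' : (((powersetCard 1 (range m)).filter (fun B => Disjoint A B)).card : ℝ) + 1
        ≤ lam := by rw [← hml]; exact_mod_cast hcard
    have h1 : lam - 1 ≤ (s : ℝ) * lam / ((s : ℝ) + 1) := by
      rw [le_div_iff₀ hs0]; nlinarith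
    have h2 : (0 : ℝ) ≤ 4 * (s : ℝ) * (((1 : ℕ) : ℝ) / n) := by positivity
    simp only [Nat.sub_self, Nat.choose_zero_right, Nat.cast_one, mul_one] at h2 ⊢
    linarith
  obtain ⟨q, rfl⟩ : ∃ q, k = q + 1 := ⟨k - 1, by omega⟩
  simp only [Nat.add_sub_cancel] at *
  set μ : ℝ := lam / (s + 1) with hμ
  have hμl : μ * (s + 1) = lam := by rw [hμ]; field_simp
  have hμ1 : μ ≤ 1 := by rw [hμ, div_le_one hs0]; exact hlam₂
  have hμ0 : 0 < μ := by rw [hμ]; exact div_pos (by linarith) hs0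
  obtain ⟨u, hua, hu1, hu2⟩ :=
    exists_threshold (n - s - 1) q (by omega) (by omega) μ hμ0 hμ1
  set t := u + (s + 1) with ht
  set S := range (s + 1) with hS
  have hSn : S ⊆ range n := range_subset_range.2 (by omega)
  have hSt : S ⊆ range t := range_subset_range.2 (by omega)
  have htn : range t ⊆ range n := range_subset_range.2 (by omega)
  set G := (powersetCard (q + 1) (range n)).filter (fun B => 2 ≤ (B ∩ S).card) with hG
  set H := (powersetCard (q + 1) (range t)).filter (fun B => (B ∩ S).card = 1) with hH
  have hGc := card_two_le n (q + 1) s hk (by omega)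
  rw [← hS, ← hG, Nat.add_sub_cancel] at hGc
  have hHc : H.card = (s + 1) * u.choose q := by
    have := card_disjoint_inter_eq_one S ∅ t (q + 1) hk hSt
    simp only [disjoint_empty_left, true_and, sdiff_empty, card_sdiff_of_subset hSt] at this
    rw [hH, this, hS]
    simp [ht]
  have hGc' : (G.card : ℝ) + (n - s).choose (q + 1) + s * (n - s - 1).choose q
      = n.choose (q + 1) := by exact_mod_cast hGc
  have hmG : (m : ℝ) = G.card + lam * (n - s - 1).choose q := by
    rw [hm, ← hGc']; ring
  have hGm : G.card ≤ m := by
    have : (G.card : ℝ) ≤ m := by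
      rw [hmG]
      have : 0 ≤ lam * ((n - s - 1).choose q : ℝ) := by
        refine mul_nonneg (by linarith) (Nat.cast_nonneg _)
      linarith
    exact_mod_cast this
  have hmH : m - G.card ≤ H.card := by
    have : ((m - G.card : ℕ) : ℝ) ≤ H.card := by
      rw [Nat.cast_sub hGm, hmG, hHc, ← hμl]
      push_cast
      nlinarith
    exact_mod_cast this
  obtain ⟨H', hH'H, hH'c⟩ := exists_subset_card_eq hmH
  have hdisj : Disjoint G H' := by
    rw [disjoint_left]
    intro B hB hB'
    have h1 := (mem_filter.1 hB).2
    have h2 := (mem_filter.1 (hH'H hB')).2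
    omega
  have hHn : H ⊆ powersetCard (q + 1) (range n) :=
    (filter_subset _ _).trans (powersetCard_mono htn)
  have hFn : G ∪ H' ⊆ powersetCard (q + 1) (range n) :=
    union_subset (filter_subset _ _) (hH'H.trans hHn)
  refine ⟨G ∪ H', hFn, by rw [card_union_of_disjoint hdisj, hH'c]; omega, fun A hAF => ?_⟩
  have hAn := hFn hAF
  have hmeet := card_meet_le S A n (q + 1) hk hSn hAn
  rw [Nat.add_sub_cancel] at hmeet
  have hsplit : (S \ A).card + (A ∩ S).card = s + 1 := by
    have := card_sdiff_add_card_inter S A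
    rw [inter_comm S A] at this
    rw [this, hS, card_range]
  set W := (powersetCard (q + 1) (range n)).filter
    (fun B => Disjoint A B ∧ 1 ≤ (B ∩ S).card) with hW
  have hWsub : (G ∪ H').filter (fun B => Disjoint A B) ⊆ W := by
    intro B hB
    obtain ⟨hBF, hd⟩ := mem_filter.1 hB
    refine mem_filter.2 ⟨hFn hBF, hd, ?_⟩
    rcases mem_union.1 hBF with h | h
    · have := (mem_filter.1 h).2; omega
    · have := (mem_filter.1 (hH'H h)).2; omega
  have hsμ : (s : ℝ) * lam / (s + 1) = s * μ := by rw [hμ]; ring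
  rw [hsμ]
  rcases mem_union.1 hAF with hAG | hAH
  · have h2 : 2 ≤ (A ∩ S).card := (mem_filter.1 hAG).2
    have h3 : ((G ∪ H').filter (fun B => Disjoint A B)).card
        ≤ (s - 1) * (n - (q + 1) - 1).choose q :=
      (card_le_card hWsub).trans (hmeet.trans (Nat.mul_le_mul_right _ (by omega)))
    have h4 : (((G ∪ H').filter (fun B => Disjoint A B)).card : ℝ)
        ≤ ((s : ℝ) - 1) * (n - (q + 1) - 1).choose q := by
      have hs1 : ((s - 1 : ℕ) : ℝ) = (s : ℝ) - 1 := by rw [Nat.cast_sub hs]; simp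
      rw [← hs1]; exact_mod_cast h3
    refine h4.trans (mul_le_mul_of_nonneg_right ?_ (Nat.cast_nonneg _))
    have h5 : (0 : ℝ) ≤ 4 * (s : ℝ) * (((q + 1 : ℕ) : ℝ) / n) := by positivity
    have h6 : (s : ℝ) - 1 ≤ s * μ := by
      rw [hμ, ← mul_div_assoc, le_div_iff₀ hs0]; nlinarith
    linarith
  · obtain ⟨hAt, hA1⟩ := mem_filter.1 (hH'H hAH)
    obtain ⟨hAt, hAk⟩ := mem_powersetCard.1 hAt
    have hSA : (S \ A).card = s := by omega
    rw [hSA] at hmeet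
    -- the points of `[v]` outside both `S` and `A`
    have hcount : ∀ v, range t ⊆ range v → ((range v \ S) \ A).card = v - s - 1 - q := by
      intro v hv
      have hvt : t ≤ v := range_subset_range.1 hv
      have hUv : S ∪ A ⊆ range v := union_subset (hSt.trans hv) (hAt.trans hv)
      have hU := card_union_add_card_inter S A
      have hSc : S.card = s + 1 := card_range _
      rw [inter_comm S A, hA1, hAk, hSc] at hU
      rw [sdiff_sdiff_left, sup_eq_union, card_sdiff_of_subset hUv, card_range]
      omega
    have hW1 := card_disjoint_inter_eq_one S A n (q + 1) hk hSn
    have hWt := card_disjoint_inter_eq_one S A t (q + 1) hk hSt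
    rw [hSA, hcount n htn, Nat.add_sub_cancel] at hW1
    rw [hSA, hcount t Subset.rfl, Nat.add_sub_cancel,
      show t - s - 1 - q = u - q by omega] at hWt
    set W1 := (powersetCard (q + 1) (range n)).filter
      (fun B => Disjoint A B ∧ (B ∩ S).card = 1) with hW1d
    set Wt := (powersetCard (q + 1) (range t)).filter
      (fun B => Disjoint A B ∧ (B ∩ S).card = 1) with hWtd
    have hW1W : W1 ⊆ W := by
      intro B hB
      obtain ⟨h1, h2, h3⟩ := mem_filter.1 hB
      exact mem_filter.2 ⟨h1, h2, h3.ge⟩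
    have hsub : (G ∪ H').filter (fun B => Disjoint A B) ⊆ (W \ W1) ∪ Wt := by
      intro B hB
      have hBW := hWsub hB
      obtain ⟨hBF, hd⟩ := mem_filter.1 hB
      rcases mem_union.1 hBF with h | h
      · refine mem_union_left _ (mem_sdiff.2 ⟨hBW, fun h1 => ?_⟩)
        have h2 := (mem_filter.1 h1).2.2
        have h3 := (mem_filter.1 h).2
        omega
      · obtain ⟨h1, h2⟩ := mem_filter.1 (hH'H h)
        exact mem_union_right _ (mem_filter.2 ⟨h1, hd, h2⟩)
    have hdeg : ((G ∪ H').filter (fun B => Disjoint A B)).card + W1.card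
        ≤ W.card + Wt.card := by
      have h1 := card_le_card hsub
      have h2 := card_union_le (W \ W1) Wt
      have h3 := card_sdiff_add_card_eq_card hW1W
      omega
    rw [hW1, hWt] at hdeg
    have hfin : ((G ∪ H').filter (fun B => Disjoint A B)).card
        + s * (n - s - 1 - q).choose q
        ≤ s * (n - (q + 1) - 1).choose q + s * (u - q).choose q := by omega
    have hfin' : (((G ∪ H').filter (fun B => Disjoint A B)).card : ℝ)
        + s * (n - s - 1 - q).choose q
        ≤ s * (n - (q + 1) - 1).choose q + s * (u - q).choose q := by exact_mod_cast hfin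
    have hest := degree_estimate n q s (by omega) hs hn μ hμ1 (by linarith)
      ((u - q).choose q : ℝ) hu2
    linarith
end
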